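/- Let d ≥ 1, let T be a d-hypertree on [n] over F_2, and let Z be a (d-1)-cycle on [n]. Then there exists a unique subset F ⊆ T with ∂F = Z. -/

import Mathlib

open Finset symmDiff

/-- The vertex set `[n] = {1, …, n}`. -/
def rng (n : ℕ) : Finset ℕ := Finset.Icc 1 n

/-- The set of `d`-simplices (i.e. `(d+1)`-element subsets) on the vertex set `V`. -/
def simplices (V : Finset ℕ) (d : ℕ) : Finset (Finset ℕ) :=
  V.powerset.filter fun σ => σ.card = d + 1

/-- The mod-2 boundary of a set `X` of simplices: the set of faces `τ` of codimension one
(`|τ| + 1 = |σ|`) contained in an odd number of members of `X`. -/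
def bd (X : Finset (Finset ℕ)) : Finset (Finset ℕ) :=
  (X.biUnion fun σ => σ.powerset).filter
    fun τ => Odd (X.filter fun σ => τ ⊆ σ ∧ τ.card + 1 = σ.card).card

/-- A set of simplices is acyclic (a forest) over `F_2` if no nonempty subset has
empty boundary. -/
def IsAcyclic (F : Finset (Finset ℕ)) : Prop :=
  ∀ Y ⊆ F, Y ≠ ∅ → bd Y ≠ ∅

/-- A `d`-hypertree on `V`: a maximal acyclic set of `d`-simplices on `V`. -/
def IsHypertreeOn (V : Finset ℕ) (d : ℕ) (T : Finset (Finset ℕ)) : Prop :=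
  T ⊆ simplices V d ∧ IsAcyclic T ∧
    ∀ G, T ⊆ G → G ⊆ simplices V d → IsAcyclic G → G = T

/-- A simple cycle over `F_2`: a nonempty set with empty boundary, no nonempty proper
subset of which has empty boundary. -/
def IsSimpleCycle (Z : Finset (Finset ℕ)) : Prop :=
  Z ≠ ∅ ∧ bd Z = ∅ ∧ ∀ Y ⊂ Z, Y ≠ ∅ → bd Y ≠ ∅

/-- Collapsibility: `X` can be reduced to `∅` by repeatedly removing a simplex `σ ∈ X`
containing a codimension-one face contained in no other current member of `X`. -/
inductive Collapsible : Finset (Finset ℕ) → Prop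
  | empty : Collapsible ∅
  | step (X : Finset (Finset ℕ)) (σ τ : Finset ℕ) (hσ : σ ∈ X) (hτ : τ ⊆ σ)
      (hcard : τ.card + 1 = σ.card) (huniq : ∀ σ' ∈ X, τ ⊆ σ' → σ' = σ)
      (h : Collapsible (X.erase σ)) : Collapsible X

/-- The cone over `X` with apex `v`. -/
def cone (v : ℕ) (X : Finset (Finset ℕ)) : Finset (Finset ℕ) :=
  X.image (insert v)

/-- The link of the vertex `v` in `X`. -/
def link (v : ℕ) (X : Finset (Finset ℕ)) : Finset (Finset ℕ) :=
  (X.filter fun σ => v ∈ σ).image fun σ => σ.erase v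

/-- `fill Z T`: the subset `F ⊆ T` with `∂F = Z` (when it exists; it is unique when `T`
is a hypertree and `Z` a cycle). -/
noncomputable def fill (Z T : Finset (Finset ℕ)) : Finset (Finset ℕ) :=
  if h : ∃ F, F ⊆ T ∧ bd F = Z then h.choose else ∅

/-- The average filling-volume `μ(T)` of a `d`-hypertree `T` on `[n]`. -/
noncomputable def fillVolAvg (n d : ℕ) (T : Finset (Finset ℕ)) : ℝ :=
  (∑ σ ∈ simplices (rng n) d, ((fill (bd {σ}) T).card : ℝ)) / (n.choose (d + 1) : ℝ)

open Classical in
/-- The cut of `τ` in `T`: the set of `d`-simplices `σ` on `[n]` such that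
`T ⊕ {τ} ⊕ {σ}` is a `d`-hypertree on `[n]`. -/
noncomputable def cut (n d : ℕ) (τ : Finset ℕ) (T : Finset (Finset ℕ)) : Finset (Finset ℕ) :=
  (simplices (rng n) d).filter fun σ => IsHypertreeOn (rng n) d ((T ∆ {τ}) ∆ {σ})

/-!
The boundary is additive for symmetric difference. Acyclicity of `T` therefore makes `∂` injective
on the subsets of `T`, which gives uniqueness. For existence, coning off a vertex `v` satisfies
`∂ (v * X) = X + v * ∂X`, so a cycle `Z` bounds the cone over the simplices of `Z` avoiding `v`.
By maximality of `T`, each `d`-simplex outside `T` closes a cycle with simplices of `T`, so the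
boundary of any set of `d`-simplices is also the boundary of a subset of `T`.
-/

theorem odd_card_symmDiff {α : Type*} [DecidableEq α] (s t : Finset α) :
    Odd #(s ∆ t) ↔ ¬(Odd #s ↔ Odd #t) := by
  have hcard : #(s ∆ t) = #(s \ t) + #(t \ s) := card_union_of_disjoint disjoint_sdiff_sdiff
  rw [hcard, ← card_sdiff_add_card_inter s t, ← card_sdiff_add_card_inter t s, inter_comm t s]
  grind

section Boundary

variable {X Y : Finset (Finset ℕ)} {σ τ : Finset ℕ}

/-- The simplices of `X` that contain `τ` as a face of codimension one. -/
def cofaces (X : Finset (Finset ℕ)) (τ : Finset ℕ) : Finset (Finset ℕ) :=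
  {σ ∈ X | τ ⊆ σ ∧ #τ + 1 = #σ}

theorem mem_cofaces : σ ∈ cofaces X τ ↔ σ ∈ X ∧ τ ⊆ σ ∧ #τ + 1 = #σ :=
  mem_filter

theorem cofaces_symmDiff (X Y : Finset (Finset ℕ)) (τ : Finset ℕ) :
    cofaces (X ∆ Y) τ = cofaces X τ ∆ cofaces Y τ := by
  ext σ
  simp only [mem_cofaces, mem_symmDiff]
  tauto

theorem mem_bd : τ ∈ bd X ↔ Odd #(cofaces X τ) := by
  refine mem_filter.trans (and_iff_right_of_imp fun hodd ↦ ?_)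
  obtain ⟨σ, hσ⟩ := card_pos.mp hodd.pos
  obtain ⟨hσX, hτσ, -⟩ := mem_filter.mp hσ
  exact mem_biUnion.mpr ⟨σ, hσX, mem_powerset.mpr hτσ⟩

theorem bd_symmDiff (X Y : Finset (Finset ℕ)) : bd (X ∆ Y) = bd X ∆ bd Y := by
  ext τ
  simp only [mem_bd, cofaces_symmDiff, odd_card_symmDiff, mem_symmDiff]
  tauto

theorem bd_insert (hσ : σ ∉ X) : bd (insert σ X) = bd {σ} ∆ bd X := by
  rw [← bd_symmDiff, symmDiff_eq_union (disjoint_singleton_left.mpr hσ), insert_eq]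

theorem notMem_of_mem_bd {v : ℕ} (hX : ∀ σ ∈ X, v ∉ σ) (hτ : τ ∈ bd X) : v ∉ τ := by
  obtain ⟨σ, hσ⟩ := card_pos.mp (mem_bd.mp hτ).pos
  obtain ⟨hσX, hτσ, -⟩ := mem_cofaces.mp hσ
  exact fun hv ↦ hX σ hσX (hτσ hv)

end Boundary

section Cone

variable {v : ℕ} {X : Finset (Finset ℕ)} {τ : Finset ℕ}

theorem mem_cone : τ ∈ cone v X ↔ ∃ σ ∈ X, insert v σ = τ :=
  mem_image

theorem mem_of_mem_cone (hτ : τ ∈ cone v X) : v ∈ τ := by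
  obtain ⟨σ, -, rfl⟩ := mem_cone.mp hτ
  exact mem_insert_self v σ

theorem insert_mem_cone (hX : ∀ σ ∈ X, v ∉ σ) (hτ : v ∉ τ) :
    insert v τ ∈ cone v X ↔ τ ∈ X := by
  refine ⟨fun h ↦ ?_, fun h ↦ mem_cone.mpr ⟨τ, h, rfl⟩⟩
  obtain ⟨σ, hσ, hστ⟩ := mem_cone.mp h
  rwa [← insert_erase_invOn.2.injOn (hX σ hσ) hτ hστ]

theorem card_cone (hX : ∀ σ ∈ X, v ∉ σ) : #(cone v X) = #X :=
  card_image_of_injOn (insert_erase_invOn.2.injOn.mono hX)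

theorem cone_subset_simplices {V : Finset ℕ} {d : ℕ} (hv : v ∈ V) (hX : ∀ σ ∈ X, v ∉ σ)
    (hXV : X ⊆ simplices V d) : cone v X ⊆ simplices V (d + 1) := by
  intro τ hτ
  obtain ⟨σ, hσ, rfl⟩ := mem_cone.mp hτ
  obtain ⟨hσV, hσcard⟩ := mem_filter.mp (hXV hσ)
  refine mem_filter.mpr ⟨mem_powerset.mpr (insert_subset hv (mem_powerset.mp hσV)), ?_⟩
  rw [card_insert_of_notMem (hX σ hσ), hσcard]

theorem cofaces_cone_of_notMem (hX : ∀ σ ∈ X, v ∉ σ) (hτ : v ∉ τ) :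
    cofaces (cone v X) τ = cone v (X ∩ {τ}) := by
  ext ρ
  simp only [mem_cofaces, mem_cone, mem_inter, mem_singleton]
  constructor
  · rintro ⟨⟨σ, hσ, rfl⟩, hsub, hcard⟩
    rw [subset_insert_iff_of_notMem hτ] at hsub
    rw [card_insert_of_notMem (hX σ hσ), add_left_inj] at hcard
    exact ⟨σ, ⟨hσ, (eq_of_subset_of_card_le hsub hcard.ge).symm⟩, rfl⟩
  · rintro ⟨σ, ⟨hσ, rfl⟩, rfl⟩
    exact ⟨⟨σ, hσ, rfl⟩, subset_insert v σ, (card_insert_of_notMem hτ).symm⟩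

theorem cofaces_cone_insert (hX : ∀ σ ∈ X, v ∉ σ) (hτ : v ∉ τ) :
    cofaces (cone v X) (insert v τ) = cone v (cofaces X τ) := by
  have hface : ∀ σ ∈ X, (insert v τ ⊆ insert v σ ∧ #(insert v τ) + 1 = #(insert v σ) ↔
      τ ⊆ σ ∧ #τ + 1 = #σ) := fun σ hσ ↦ by
    rw [insert_subset_insert_iff hτ, card_insert_of_notMem hτ, card_insert_of_notMem (hX σ hσ),
      add_left_inj]
  rw [cofaces, cone, filter_image, filter_congr hface]
  rfl

theorem bd_cone (hX : ∀ σ ∈ X, v ∉ σ) : bd (cone v X) = X ∆ cone v (bd X) := by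
  ext τ
  rw [mem_bd, mem_symmDiff]
  by_cases hv : v ∈ τ
  · obtain ⟨ρ, hρ, rfl⟩ : ∃ ρ, v ∉ ρ ∧ insert v ρ = τ :=
      ⟨τ.erase v, notMem_erase v τ, insert_erase hv⟩
    have hcof : ∀ σ ∈ cofaces X ρ, v ∉ σ := fun σ hσ ↦ hX σ (mem_cofaces.mp hσ).1
    have hτX : insert v ρ ∉ X := fun h ↦ hX _ h hv
    rw [cofaces_cone_insert hX hρ, card_cone hcof, ← mem_bd,
      insert_mem_cone (fun σ ↦ notMem_of_mem_bd hX) hρ]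
    tauto
  · have hinter : ∀ σ ∈ X ∩ {τ}, v ∉ σ := fun σ hσ ↦ hX σ (mem_inter.mp hσ).1
    have hτcone : τ ∉ cone v (bd X) := fun h ↦ hv (mem_of_mem_cone h)
    rw [cofaces_cone_of_notMem hX hv, card_cone hinter]
    by_cases hτX : τ ∈ X <;> simp [hτX, hτcone]

end Cone

section Deletion

variable {v : ℕ} {X Z : Finset (Finset ℕ)} {σ : Finset ℕ}

/-- The deletion of the vertex `v` from `X`: the simplices of `X` avoiding `v`. It complements the
cone over the link of `v`. -/
def deletion (v : ℕ) (X : Finset (Finset ℕ)) : Finset (Finset ℕ) :=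
  {σ ∈ X | v ∉ σ}

theorem notMem_of_mem_deletion (hσ : σ ∈ deletion v X) : v ∉ σ :=
  (mem_filter.mp hσ).2

theorem notMem_of_mem_link (hσ : σ ∈ link v X) : v ∉ σ := by
  obtain ⟨ρ, -, rfl⟩ := mem_image.mp hσ
  exact notMem_erase v ρ

theorem cone_link (v : ℕ) (X : Finset (Finset ℕ)) : cone v (link v X) = {σ ∈ X | v ∈ σ} := by
  rw [cone, link, image_image]
  exact (image_congr fun σ hσ ↦ insert_erase (mem_filter.mp hσ).2).trans image_id

theorem deletion_symmDiff_cone_link (v : ℕ) (X : Finset (Finset ℕ)) :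
    deletion v X ∆ cone v (link v X) = X := by
  ext σ
  simp only [cone_link, deletion, mem_symmDiff, mem_filter]
  tauto

theorem bd_deletion_eq_link (v : ℕ) (hZ : bd Z = ∅) : bd (deletion v Z) = link v Z := by
  have hbd : bd (deletion v Z) ∆ link v Z = cone v (bd (link v Z)) := by
    rw [← symmDiff_eq_empty, symmDiff_assoc, ← bd_cone fun σ ↦ notMem_of_mem_link, ← bd_symmDiff,
      deletion_symmDiff_cone_link, hZ]
  -- The left-hand side of `hbd` avoids `v`, while its right-hand side is a cone with apex `v`.
  rw [← symmDiff_eq_empty, eq_empty_iff_forall_notMem]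
  intro σ hσ
  have hv : v ∈ σ := mem_of_mem_cone (hbd ▸ hσ)
  rcases mem_union.mp (symmDiff_subset_union hσ) with hdel | hlink
  · exact notMem_of_mem_bd (fun ρ ↦ notMem_of_mem_deletion) hdel hv
  · exact notMem_of_mem_link hlink hv

theorem bd_cone_deletion (v : ℕ) (hZ : bd Z = ∅) : bd (cone v (deletion v Z)) = Z := by
  rw [bd_cone fun σ ↦ notMem_of_mem_deletion, bd_deletion_eq_link v hZ,
    deletion_symmDiff_cone_link]

theorem exists_bd_eq_of_bd_eq_empty {V : Finset ℕ} {d : ℕ} (hZV : Z ⊆ simplices V d)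
    (hZ : bd Z = ∅) : ∃ X ⊆ simplices V (d + 1), bd X = Z := by
  obtain rfl | ⟨v, hv⟩ := V.eq_empty_or_nonempty
  · have hZempty : Z = ∅ := by simpa [simplices, filter_singleton] using hZV
    exact ⟨∅, empty_subset _, hZempty.symm⟩
  · exact ⟨cone v (deletion v Z), cone_subset_simplices hv (fun σ ↦ notMem_of_mem_deletion)
      ((filter_subset _ Z).trans hZV), bd_cone_deletion v hZ⟩

end Deletion

theorem IsAcyclic.injOn_bd {T : Finset (Finset ℕ)} (hT : IsAcyclic T) :
    Set.InjOn bd {F | F ⊆ T} := by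
  intro F hF G hG hFG
  by_contra hne
  refine hT (F ∆ G) (symmDiff_subset_union.trans (union_subset hF hG))
    (mt symmDiff_eq_empty.mp hne) ?_
  rw [bd_symmDiff, symmDiff_eq_empty, hFG]

namespace IsHypertreeOn

variable {V : Finset ℕ} {d : ℕ} {T X : Finset (Finset ℕ)} {σ : Finset ℕ}

theorem exists_bd_eq_bd_singleton (hT : IsHypertreeOn V d T) (hσ : σ ∈ simplices V d) :
    ∃ F ⊆ T, bd F = bd {σ} := by
  obtain ⟨hTV, hacyclic, hmax⟩ := hT
  by_cases hσT : σ ∈ T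
  · exact ⟨{σ}, singleton_subset_iff.mpr hσT, rfl⟩
  have hcyclic : ¬IsAcyclic (insert σ T) := fun h ↦
    insert_ne_self.mpr hσT (hmax _ (subset_insert σ T) (insert_subset hσ hTV) h)
  obtain ⟨Y, hYT, hYne, hYcycle⟩ : ∃ Y ⊆ insert σ T, Y ≠ ∅ ∧ bd Y = ∅ := by
    simpa [IsAcyclic] using hcyclic
  rw [subset_insert_iff] at hYT
  have hσY : σ ∈ Y := by
    by_contra hσY
    rw [erase_eq_of_notMem hσY] at hYT
    exact hacyclic Y hYT hYne hYcycle
  refine ⟨Y.erase σ, hYT, ?_⟩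
  rw [← insert_erase hσY, bd_insert (notMem_erase σ Y), symmDiff_eq_empty] at hYcycle
  exact hYcycle.symm

theorem exists_bd_eq_bd (hT : IsHypertreeOn V d T) (hX : X ⊆ simplices V d) :
    ∃ F ⊆ T, bd F = bd X := by
  induction X using Finset.induction_on with
  | empty => exact ⟨∅, empty_subset T, rfl⟩
  | insert σ X hσX ih =>
    obtain ⟨hσ, hX⟩ := insert_subset_iff.mp hX
    obtain ⟨F, hF, hFσ⟩ := hT.exists_bd_eq_bd_singleton hσ
    obtain ⟨G, hG, hGX⟩ := ih hX
    refine ⟨F ∆ G, symmDiff_subset_union.trans (union_subset hF hG), ?_⟩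
    rw [bd_symmDiff, bd_insert hσX, hFσ, hGX]

end IsHypertreeOn

theorem existsUnique_fill_general {V : Finset ℕ} {d : ℕ} {T Z : Finset (Finset ℕ)}
    (hT : IsHypertreeOn V (d + 1) T) (hZ : Z ⊆ simplices V d) (hZcyc : bd Z = ∅) :
    ∃! F, F ⊆ T ∧ bd F = Z := by
  obtain ⟨X, hX, rfl⟩ := exists_bd_eq_of_bd_eq_empty hZ hZcyc
  obtain ⟨F, hF, hFX⟩ := hT.exists_bd_eq_bd hX
  exact ⟨F, ⟨hF, hFX⟩, fun G ⟨hG, hGX⟩ ↦ hT.2.1.injOn_bd hG hF (hGX.trans hFX.symm)⟩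

/-- For `d ≥ 1`, a `d`-hypertree `T` on `[n]` and a `(d-1)`-cycle `Z` on `[n]`, there is
a unique subset `F ⊆ T` with `∂F = Z`. -/
theorem existsUnique_fill (n d : ℕ) (hd : 1 ≤ d) (T : Finset (Finset ℕ))
    (hT : IsHypertreeOn (rng n) d T) (Z : Finset (Finset ℕ))
    (hZ : Z ⊆ simplices (rng n) (d - 1)) (hZcyc : bd Z = ∅) :
    ∃! F, F ⊆ T ∧ bd F = Z := by
  rw [← Nat.sub_add_cancel hd] at hT
  exact existsUnique_fill_general hT hZ hZcyc
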